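/- Let p be an odd prime, Γ a group, V a finite-dimensional ℚ_p-vector space with a Γ-action such that the ℚ_p-subalgebra of End_{ℚ_p}(V) generated by the image of Γ equals End_{ℚ_p}(V) (i.e. V is absolutely irreducible), and let T ⊆ V be a Γ-stable lattice. Assume that the torsion subgroup of Ext¹_{ℤ_p[Γ]}(T, T) has finite exponent. Then there exists an integer 𝔫(T) ≥ 0, depending only on T, such that for every integer n ≥ 1 the Γ-module T/pⁿT has reducibility depth at most 𝔫(T). -/

import Mathlib

/-- The submodule `a•M` of all multiples of `a` in `M`. -/
def smulTop {R : Type*} [CommRing R] (a : R) (M : Type*) [AddCommGroup M] [Module R M] :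
    Submodule R M :=
  LinearMap.range (a • (LinearMap.id : M →ₗ[R] M))

theorem smulTop_le_comap {R : Type*} [CommRing R] (a : R) {M : Type*} [AddCommGroup M]
    [Module R M] (f : M →ₗ[R] M) : smulTop a M ≤ (smulTop a M).comap f := by
  rintro x ⟨y, rfl⟩
  exact ⟨f y, by simp⟩

/-- The endomorphism of `M/aM` induced by an endomorphism of `M`. -/
def quotEnd {R : Type*} [CommRing R] (a : R) {M : Type*} [AddCommGroup M] [Module R M]
    (f : M →ₗ[R] M) : Module.End R (M ⧸ smulTop a M) :=
  Submodule.mapQ _ _ f (smulTop_le_comap a f)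

/-- The two conditions entering the definition of the reducibility depth of a module `M`
over a ring `R` (with distinguished element `π`) equipped with an action of `G`:
(i) every `G`-stable submodule of `M` not contained in `πM` contains `π^d M`;
(ii) for every `m ≥ 1`, the quotient of `Hom_G(M/π^m M, M/π^m M)` by the scalars is
annihilated by `π^d`. -/
def ReducibilityCond {R : Type*} [CommRing R] (π : R) {G : Type*} {M : Type*}
    [AddCommGroup M] [Module R M] (act : G → Module.End R M) (d : ℕ) : Prop :=
  (∀ N : Submodule R M, (∀ g : G, ∀ x ∈ N, act g x ∈ N) →
      ¬ N ≤ smulTop π M → smulTop (π ^ d) M ≤ N) ∧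
  (∀ m : ℕ, 1 ≤ m →
    ∀ ψ : Module.End R (M ⧸ smulTop (π ^ m) M),
      (∀ g : G, ψ ∘ₗ quotEnd (π ^ m) (act g) = quotEnd (π ^ m) (act g) ∘ₗ ψ) →
      ∃ c : R, π ^ d • ψ = c • (LinearMap.id : M ⧸ smulTop (π ^ m) M →ₗ[R] M ⧸ smulTop (π ^ m) M))

/-- `d` is the reducibility depth of `M`: the least integer satisfying the two conditions. -/
def HasReducibilityDepth {R : Type*} [CommRing R] (π : R) {G : Type*} {M : Type*}
    [AddCommGroup M] [Module R M] (act : G → Module.End R M) (d : ℕ) : Prop :=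
  ReducibilityCond π act d ∧ ∀ e : ℕ, ReducibilityCond π act e → d ≤ e

/-- `Ext¹_{ℤ_p[Γ]}(T,T)`, computed in the abelian category of modules over the group ring
`ℤ_p[Γ]`, with `T` regarded as a `ℤ_p[Γ]`-module via the representation `ρ`. -/
noncomputable def ExtOne (p : ℕ) [Fact p.Prime] (Γ : Type) [Group Γ]
    (T : Type) [AddCommGroup T] [Module ℤ_[p] T] (ρ : Representation ℤ_[p] Γ T) :=
  ((Ext ℤ (ModuleCat (MonoidAlgebra ℤ_[p] Γ)) 1).obj
      (Opposite.op (ModuleCat.of (MonoidAlgebra ℤ_[p] Γ) ρ.asModule))).obj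
    (ModuleCat.of (MonoidAlgebra ℤ_[p] Γ) ρ.asModule)

/-- If `πᵏ` maps all endomorphisms of a free module `T` into the span of the operators `act g`,
and every element of `R` outside `(π)` is a unit, then every quotient `T/aT` satisfies both
reducibility conditions with `d = k`. -/
theorem reducibilityCond_of_pow_smul_mem_span {R : Type*} [CommRing R] {π : R}
    (hπ : ∀ c : R, ¬ π ∣ c → IsUnit c) {G T ι : Type*} [AddCommGroup T] [Module R T]
    [Finite ι] (b : Module.Basis ι R T) (act : G → Module.End R T) (k : ℕ)
    (hk : ∀ E : Module.End R T, π ^ k • E ∈ Submodule.span R (Set.range act)) (a : R) :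
    ReducibilityCond π (fun g => quotEnd a (act g)) k := by
  classical
  have := Fintype.ofFinite ι
  refine ⟨fun N hN hNπ => ?_, fun m _ ψ hψ => ?_⟩
  · have hstable : ∀ F ∈ Submodule.span R (Set.range act), ∀ x ∈ N, quotEnd a F x ∈ N := by
      intro F hF
      induction hF using Submodule.span_induction with
      | mem F hF => obtain ⟨g, rfl⟩ := hF; exact hN g
      | zero =>
        intro x _
        obtain ⟨t, rfl⟩ := Submodule.mkQ_surjective _ x
        simp [quotEnd]
      | add F F' _ _ h h' =>
        intro x hx
        have := N.add_mem (h x hx) (h' x hx)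
        obtain ⟨t, rfl⟩ := Submodule.mkQ_surjective _ x
        simpa [quotEnd] using this
      | smul c F _ h =>
        intro x hx
        have := N.smul_mem c (h x hx)
        obtain ⟨t, rfl⟩ := Submodule.mkQ_surjective _ x
        simpa [quotEnd] using this
    obtain ⟨x, hxN, hx⟩ := SetLike.not_le_iff_exists.mp hNπ
    obtain ⟨t, rfl⟩ := Submodule.mkQ_surjective _ x
    obtain ⟨i, hi⟩ : ∃ i, ¬ π ∣ b.repr t i := by
      by_contra! h
      choose c hc using h
      refine hx ⟨Submodule.mkQ _ (∑ i, c i • b i), ?_⟩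
      rw [← b.sum_repr t]
      simp only [hc, map_sum, map_smul, LinearMap.smul_apply, LinearMap.id_apply, mul_smul,
        smul_comm π]
    obtain ⟨u, hu⟩ := hπ _ hi
    rintro _ ⟨y, rfl⟩
    obtain ⟨y, rfl⟩ := Submodule.mkQ_surjective _ y
    have := hstable _ (hk (((↑u⁻¹ : R) • b.coord i).smulRight y)) _ hxN
    simpa [quotEnd, ← hu] using this
  · have hcomm : ∀ F ∈ Submodule.span R (Set.range act), ∀ x,
        ψ (quotEnd (π ^ m) (quotEnd a F) x) = quotEnd (π ^ m) (quotEnd a F) (ψ x) := by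
      intro F hF
      induction hF using Submodule.span_induction with
      | mem F hF => obtain ⟨g, rfl⟩ := hF; exact fun x => LinearMap.congr_fun (hψ g) x
      | zero =>
        have h0 : quotEnd (π ^ m) (quotEnd a (0 : Module.End R T)) = 0 := by
          ext; simp [quotEnd]
        simp [h0]
      | add F F' _ _ h h' =>
        have hadd : quotEnd (π ^ m) (quotEnd a (F + F')) =
            quotEnd (π ^ m) (quotEnd a F) + quotEnd (π ^ m) (quotEnd a F') := by
          ext; simp [quotEnd]
        simp [hadd, h, h']
      | smul c F _ h =>
        have hsmul : quotEnd (π ^ m) (quotEnd a (c • F)) =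
            c • quotEnd (π ^ m) (quotEnd a F) := by
          ext; simp [quotEnd]
        simp [hsmul, h]
    let q : T →ₗ[R] _ := (smulTop (π ^ m) (T ⧸ smulTop a T)).mkQ ∘ₗ (smulTop a T).mkQ
    have hqs : Function.Surjective q :=
      (Submodule.mkQ_surjective _).comp (Submodule.mkQ_surjective _)
    have hquot : ∀ (F : Module.End R T) t, quotEnd (π ^ m) (quotEnd a F) (q t) = q (F t) :=
      fun F t => rfl
    suffices h : ∃ c : R, ∀ j, π ^ k • ψ (q (b j)) = c • q (b j) by
      obtain ⟨c, hc⟩ := h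
      refine ⟨c, LinearMap.cancel_right hqs |>.mp (b.ext fun j => ?_)⟩
      simpa using hc j
    rcases isEmpty_or_nonempty ι with hι | ⟨⟨i⟩⟩
    · exact ⟨0, fun j => hι.elim j⟩
    · obtain ⟨t, ht⟩ := hqs (ψ (q (b i)))
      refine ⟨π ^ k * b.repr t i, fun j => ?_⟩
      have := hcomm _ (hk ((b.coord i).smulRight (b j))) (q (b i))
      rw [← ht, hquot, hquot] at this
      simp only [LinearMap.smul_apply, LinearMap.smulRight_apply, Module.Basis.coord_apply,
        Module.Basis.repr_self, Finsupp.single_eq_same, one_smul, map_smul] at this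
      rw [this, mul_smul]

/-- An element of `ℤ_p` not divisible by `p` is a unit. -/
theorem PadicInt.isUnit_of_not_dvd {p : ℕ} [Fact p.Prime] {c : ℤ_[p]}
    (hc : ¬ (p : ℤ_[p]) ∣ c) : IsUnit c := by
  by_contra h
  refine hc ?_
  rw [← Ideal.mem_span_singleton, ← PadicInt.maximalIdeal_eq_span_p]
  exact (IsLocalRing.mem_maximalIdeal c).mpr h

/-- Every element of `ℚ_p` becomes integral after multiplication by a power of `p`. -/
theorem Padic.exists_pow_mul_eq_coe {p : ℕ} [Fact p.Prime] (a : ℚ_[p]) :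
    ∃ (j : ℕ) (z : ℤ_[p]), (p : ℚ_[p]) ^ j * a = z := by
  obtain ⟨j, hj⟩ := pow_unbounded_of_one_lt ‖a‖
    (show (1 : ℝ) < p by exact_mod_cast (Fact.out : p.Prime).one_lt)
  refine ⟨j, ⟨(p : ℚ_[p]) ^ j * a, ?_⟩, rfl⟩
  have hp : (0 : ℝ) < (p : ℝ) ^ j := pow_pos (by exact_mod_cast (Fact.out : p.Prime).pos) j
  rw [norm_mul, norm_pow, Padic.norm_p, inv_pow, inv_mul_le_iff₀ hp]
  linarith

/-- If the image of `Γ` spans `End V`, some power of `p` maps the endomorphisms of a stable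
lattice `T` into the `ℤ_p`-span of the image of `Γ`. -/
theorem exists_pow_smul_mem_span {p : ℕ} [Fact p.Prime] {Γ V ι : Type*} [Group Γ]
    [AddCommGroup V] [Module ℚ_[p] V] [Module ℤ_[p] V] [IsScalarTower ℤ_[p] ℚ_[p] V]
    (ρ : Γ →* Module.End ℚ_[p] V)
    (hirr : Algebra.adjoin ℚ_[p] (Set.range fun g : Γ => (ρ g : Module.End ℚ_[p] V)) = ⊤)
    (T : Submodule ℤ_[p] V) (hTspan : Submodule.span ℚ_[p] (T : Set V) = ⊤)
    [Finite ι] (b : Module.Basis ι ℤ_[p] T) (ρT : Representation ℤ_[p] Γ T)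
    (hcompat : ∀ g : Γ, ∀ x : T, ((ρT g x : V)) = ρ g (x : V)) :
    ∃ k : ℕ, ∀ E : Module.End ℤ_[p] T,
      (p : ℤ_[p]) ^ k • E ∈ Submodule.span ℤ_[p] (Set.range ρT) := by
  have hsmul (z : ℤ_[p]) (v : V) : (z : ℚ_[p]) • v = z • v := algebraMap_smul ℚ_[p] z v
  have hpsmul (j : ℕ) (v : V) : (p : ℚ_[p]) ^ j • v = (p : ℤ_[p]) ^ j • v := by
    rw [← hsmul]; simp
  have hspan : Submodule.span ℚ_[p] (Set.range ρ) = ⊤ := by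
    have h := Algebra.adjoin_eq_span ℚ_[p] (Set.range ρ)
    have hcl : (Submonoid.closure (Set.range ρ) : Set (Module.End ℚ_[p] V)) = Set.range ρ := by
      rw [← MonoidHom.coe_mrange, Submonoid.closure_eq]
    rw [hcl] at h
    rw [← h]
    exact (congrArg Subalgebra.toSubmodule hirr).trans Algebra.top_toSubmodule
  have hclear (f : Module.End ℚ_[p] V) : ∃ k : ℕ,
      ∃ F ∈ Submodule.span ℤ_[p] (Set.range ρT), ∀ x : T,
        (F x : V) = (p : ℚ_[p]) ^ k • f x := by
    have hf : f ∈ Submodule.span ℚ_[p] (Set.range ρ) := hspan ▸ Submodule.mem_top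
    induction hf using Submodule.span_induction with
    | mem f hf =>
      obtain ⟨g, rfl⟩ := hf
      exact ⟨0, ρT g, Submodule.subset_span ⟨g, rfl⟩, fun x => by simp [hcompat]⟩
    | zero => exact ⟨0, 0, Submodule.zero_mem _, fun x => by simp⟩
    | add f f' _ _ h h' =>
      obtain ⟨k, F, hF, hFf⟩ := h
      obtain ⟨k', F', hF', hFf'⟩ := h'
      refine ⟨k + k', (p : ℤ_[p]) ^ k' • F + (p : ℤ_[p]) ^ k • F',
        Submodule.add_mem _ (Submodule.smul_mem _ _ hF) (Submodule.smul_mem _ _ hF'),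
        fun x => ?_⟩
      simp only [LinearMap.add_apply, LinearMap.smul_apply, Submodule.coe_add, Submodule.coe_smul,
        hFf, hFf', ← hpsmul, smul_smul, smul_add, pow_add, mul_comm]
    | smul c f _ h =>
      obtain ⟨k, F, hF, hFf⟩ := h
      obtain ⟨j, z, hz⟩ := Padic.exists_pow_mul_eq_coe c
      refine ⟨k + j, z • F, Submodule.smul_mem _ _ hF, fun x => ?_⟩
      simp only [LinearMap.smul_apply, Submodule.coe_smul, hFf, ← hsmul, ← hz, smul_smul, pow_add]
      congr 1
      ring
  have hli : LinearIndependent ℚ_[p] fun i => (b i : V) :=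
    (LinearIndependent.iff_fractionRing ℤ_[p] ℚ_[p]).mp
      (b.linearIndependent.map' T.subtype T.ker_subtype)
  have hbspan : ⊤ ≤ Submodule.span ℚ_[p] (Set.range fun i => (b i : V)) := by
    rw [← hTspan, Submodule.span_le]
    intro x hx
    have hxb : (⟨x, hx⟩ : T) ∈ Submodule.span ℤ_[p] (Set.range b) := by simp [b.span_eq]
    have := Submodule.mem_map_of_mem (f := T.subtype) hxb
    rw [Submodule.map_span, ← Set.range_comp] at this
    exact Submodule.span_le_restrictScalars ℤ_[p] ℚ_[p] _ this
  have hE (E : Module.End ℤ_[p] T) : ∃ k : ℕ,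
      (p : ℤ_[p]) ^ k • E ∈ Submodule.span ℤ_[p] (Set.range ρT) := by
    let B := Module.Basis.mk hli hbspan
    obtain ⟨k, F, hF, hFf⟩ := hclear (B.constr ℚ_[p] fun i => (E (b i) : V))
    refine ⟨k, ?_⟩
    convert hF
    refine b.ext fun i => Subtype.ext ?_
    have hB : B i = b i := Module.Basis.mk_apply hli hbspan i
    rw [hFf, ← hB, Module.Basis.constr_basis, hpsmul]
    rfl
  have : Module.Finite ℤ_[p] T := Module.Finite.of_basis b
  have : Module.Free ℤ_[p] T := Module.Free.of_basis b
  obtain ⟨S, hS⟩ := (Module.finite_def (R := ℤ_[p]) (M := Module.End ℤ_[p] T)).mp inferInstance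
  choose k hk using hE
  refine ⟨∑ s ∈ S, k s, fun E => ?_⟩
  have hES : E ∈ Submodule.span ℤ_[p] (S : Set (Module.End ℤ_[p] T)) := hS ▸ Submodule.mem_top
  induction hES using Submodule.span_induction with
  | mem E hE =>
    obtain ⟨l, hl⟩ := Nat.exists_eq_add_of_le
      (Finset.single_le_sum (f := k) (fun _ _ => Nat.zero_le _) hE)
    rw [hl, add_comm, pow_add, mul_smul]
    exact Submodule.smul_mem _ _ (hk E)
  | zero => simp
  | add E E' _ _ h h' => rw [smul_add]; exact Submodule.add_mem _ h h'
  | smul c E _ h => rw [smul_comm]; exact Submodule.smul_mem _ _ h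

/-- Let `p` be an odd prime, `Γ` a group, `V` a finite-dimensional
`ℚ_p`-vector space with an absolutely irreducible `Γ`-action, and `T ⊆ V` a `Γ`-stable
lattice such that the torsion subgroup of `Ext¹_{ℤ_p[Γ]}(T,T)` has finite exponent.  Then
there is an integer `𝔫(T) ≥ 0` such that for every `n ≥ 1` the `Γ`-module `T/pⁿT` has
reducibility depth at most `𝔫(T)`. -/
theorem statement7 (p : ℕ) [Fact p.Prime] (hodd : Odd p)
    {Γ : Type} [Group Γ]
    {V : Type} [AddCommGroup V] [Module ℚ_[p] V] [FiniteDimensional ℚ_[p] V]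
    [Module ℤ_[p] V] [IsScalarTower ℤ_[p] ℚ_[p] V]
    (ρ : Γ →* Module.End ℚ_[p] V)
    (hirr : Algebra.adjoin ℚ_[p] (Set.range fun g : Γ => (ρ g : Module.End ℚ_[p] V)) = ⊤)
    (T : Submodule ℤ_[p] V) (hTfg : T.FG)
    (hTspan : Submodule.span ℚ_[p] (T : Set V) = ⊤)
    (ρT : Representation ℤ_[p] Γ T)
    (hcompat : ∀ g : Γ, ∀ x : T, ((ρT g x : V)) = ρ g (x : V))
    (hExt : ∃ m : ℕ, m ≠ 0 ∧ ∀ x : ExtOne p Γ T ρT,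
      (∃ k : ℕ, k ≠ 0 ∧ k • x = 0) → m • x = 0) :
    ∃ 𝔫 : ℕ, ∀ n : ℕ, 1 ≤ n → ∃ d : ℕ, d ≤ 𝔫 ∧
      HasReducibilityDepth ((p : ℤ_[p]))
        (fun g : Γ => quotEnd ((p : ℤ_[p]) ^ n) (ρT g)) d := by
  classical
  have : Module.IsTorsionFree ℤ_[p] V := .trans_faithfulSMul ℤ_[p] ℚ_[p] V
  have : Module.Finite ℤ_[p] T := Module.Finite.iff_fg.mpr hTfg
  let b := Module.Free.chooseBasis ℤ_[p] T
  obtain ⟨k, hk⟩ := exists_pow_smul_mem_span ρ hirr T hTspan b ρT hcompat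
  refine ⟨k, fun n _ => ?_⟩
  have hcond := reducibilityCond_of_pow_smul_mem_span
    (fun c hc => PadicInt.isUnit_of_not_dvd hc) b ρT k hk ((p : ℤ_[p]) ^ n)
  have hex : ∃ d, ReducibilityCond (p : ℤ_[p]) (fun g => quotEnd ((p : ℤ_[p]) ^ n) (ρT g)) d :=
    ⟨k, hcond⟩
  exact ⟨Nat.find hex, Nat.find_min' hex hcond, Nat.find_spec hex, fun e he => Nat.find_min' hex he⟩
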